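/- arXiv:2206.14736 — 9 statements merged into one kernel-verified Lean document; each statement's English description precedes it below -/
import Mathlib

section
/- Let D be a positive integer, I a finite set, and r : I → ℕ a function with r(i) ≥ 1 for all i ∈ I. Let K ≥ 0 and ℓ ≥ 0 be real numbers such that for every integer s ≥ 1 the cardinality of {i ∈ I : r(i) = s} is at most K·(ℓ+s)^D. Let ξ, κ, Φ, q be positive reals with q ≥ (ξ·κ)^κ · Φ. Then ∑_{i∈I} exp(−(q·e^{r(i)/ξ}/Φ)^{1/κ}) ≤ K · 2^{2D+2} · D! · max(ℓ^D, 1) · exp(−(q/Φ)^{1/κ}/(ξ·κ)). -/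
/-- Lemma 1 (iii) of the paper.
Let `D ≥ 1`, `I` a finite set, `r : I → ℕ` with `r i ≥ 1`, and `K, ℓ ≥ 0` such
that for every `s ≥ 1` the level set `{i : r i = s}` has cardinality at most
`K (ℓ + s)^D`.  Let `ξ, κ, Φ, q > 0` with `q ≥ (ξκ)^κ Φ`.  Then
`∑_{i ∈ I} exp(-(q e^{r(i)/ξ}/Φ)^{1/κ})
   ≤ K 2^{2D+2} D! max(ℓ^D, 1) exp(-(q/Φ)^{1/κ}/(ξκ))`. -/
theorem stmt_2 {I : Type*} [Fintype I] (D : ℕ) (hD : 0 < D) (r : I → ℕ)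
    (hr : ∀ i : I, 1 ≤ r i) (K ℓ : ℝ) (hK : 0 ≤ K) (hℓ : 0 ≤ ℓ)
    (hcard : ∀ s : ℕ, 1 ≤ s →
      ((Finset.univ.filter fun i : I => r i = s).card : ℝ) ≤ K * (ℓ + (s : ℝ)) ^ D)
    (ξ κ Φ q : ℝ) (hξ : 0 < ξ) (hκ : 0 < κ) (hΦ : 0 < Φ) (hq : 0 < q)
    (hqΦ : (ξ * κ) ^ κ * Φ ≤ q) :
    ∑ i : I, Real.exp (-(q * Real.exp ((r i : ℝ) / ξ) / Φ) ^ (1 / κ)) ≤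
      K * 2 ^ (2 * D + 2) * (Nat.factorial D : ℝ) * max (ℓ ^ D) 1 *
        Real.exp (-(q / Φ) ^ (1 / κ) / (ξ * κ)) := by
  classical
  set c : ℝ := ξ * κ with hc
  have hc0 : 0 < c := mul_pos hξ hκ
  have hqp : 0 < q / Φ := div_pos hq hΦ
  set a : ℝ := (q / Φ) ^ (1 / κ) with ha
  have hac : c ≤ a := by
    have h1 : c ^ κ ≤ q / Φ := by rw [le_div_iff₀ hΦ]; exact hqΦ
    have h2 := Real.rpow_le_rpow (by positivity) h1 (by positivity : 0 ≤ 1 / κ)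
    rwa [← Real.rpow_mul hc0.le, mul_one_div_cancel hκ.ne', Real.rpow_one] at h2
  have ha0 : 0 < a := lt_of_lt_of_le hc0 hac
  have hb : 1 ≤ a / c := by rw [le_div_iff₀ hc0]; linarith
  have hx2 : Real.exp (-1) ≤ 1 / 2 := by
    rw [Real.exp_neg, one_div]
    apply inv_anti₀ (by norm_num)
    have := Real.add_one_le_exp (1 : ℝ)
    linarith
  -- single term bound
  have hterm : ∀ i : I, Real.exp (-(q * Real.exp ((r i : ℝ) / ξ) / Φ) ^ (1 / κ)) ≤
      Real.exp (-a / c) * (1 / 2) ^ (r i - 1) := by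
    intro i
    obtain ⟨n, hn⟩ : ∃ n, r i = n + 1 := ⟨r i - 1, by have := hr i; omega⟩
    rw [hn]
    have e1 : (q * Real.exp (((n + 1 : ℕ) : ℝ) / ξ) / Φ) ^ (1 / κ)
        = a * Real.exp (((n + 1 : ℕ) : ℝ) / c) := by
      rw [mul_div_right_comm, Real.mul_rpow hqp.le (Real.exp_pos _).le, ← Real.exp_mul, hc]
      congr 2
      field_simp
    rw [e1]
    have e2 : a * (((n + 1 : ℕ) : ℝ) / c) ≤ a * Real.exp (((n + 1 : ℕ) : ℝ) / c) := by
      apply mul_le_mul_of_nonneg_left _ ha0.le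
      linarith [Real.add_one_le_exp (((n + 1 : ℕ) : ℝ) / c)]
    have e3 : a * (((n + 1 : ℕ) : ℝ) / c) = a / c + (a / c) * n := by
      push_cast; ring
    have e4 : (n : ℝ) ≤ (a / c) * n := le_mul_of_one_le_left (Nat.cast_nonneg n) hb
    calc Real.exp (-(a * Real.exp (((n + 1 : ℕ) : ℝ) / c)))
        ≤ Real.exp (-a / c + n * (-1)) := by
          apply Real.exp_le_exp.mpr
          rw [neg_div]; linarith
      _ = Real.exp (-a / c) * Real.exp (-1) ^ n := by
          rw [Real.exp_add, Real.exp_nat_mul]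
      _ ≤ Real.exp (-a / c) * (1 / 2) ^ (n + 1 - 1) := by
          simp only [Nat.add_sub_cancel]
          gcongr
  set M : ℝ := max (ℓ ^ D) 1 with hM
  have hM0 : 0 ≤ M := le_trans zero_le_one (le_max_right _ _)
  have hpoly : ∀ n : ℕ, (ℓ + ((n + 1 : ℕ) : ℝ)) ^ D ≤
      2 ^ D * M * (D.factorial * ((n + D).choose D : ℝ)) := by
    intro n
    have h1 : (1 : ℝ) ≤ ((n + 1 : ℕ) : ℝ) := by push_cast; linarith [Nat.cast_nonneg (α := ℝ) n]
    have h2 : ℓ + ((n + 1 : ℕ) : ℝ) ≤ 2 * max ℓ 1 * ((n + 1 : ℕ) : ℝ) := by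
      have := le_max_left ℓ 1
      have := le_max_right ℓ 1
      nlinarith
    have h3 : (max ℓ 1) ^ D ≤ M := by
      rcases le_total ℓ 1 with h | h
      · rw [max_eq_right h, one_pow]; exact le_max_right _ _
      · rw [max_eq_left h]; exact le_max_left _ _
    have h4 : (((n + 1 : ℕ) : ℝ)) ^ D ≤ D.factorial * ((n + D).choose D : ℝ) := by
      have := Nat.pow_succ_le_ascFactorial (n + 1) D
      rw [Nat.ascFactorial_eq_factorial_mul_choose] at this
      exact_mod_cast this
    calc (ℓ + ((n + 1 : ℕ) : ℝ)) ^ D ≤ (2 * max ℓ 1 * ((n + 1 : ℕ) : ℝ)) ^ D := by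
          apply pow_le_pow_left₀ (by positivity) h2
      _ = 2 ^ D * (max ℓ 1) ^ D * ((n + 1 : ℕ) : ℝ) ^ D := by rw [mul_pow, mul_pow]
      _ ≤ _ := by gcongr
  have hgeom : ∀ N : ℕ, ∑ n ∈ Finset.range N, ((n + D).choose D : ℝ) * (1 / 2) ^ n
      ≤ 2 ^ (D + 1) := by
    intro N
    have hn : ‖(1 / 2 : ℝ)‖ < 1 := by norm_num
    have hs := summable_choose_mul_geometric_of_norm_lt_one D hn
    have ht := tsum_choose_mul_geometric_of_norm_lt_one D hn
    have := hs.sum_le_tsum (Finset.range N) (fun i _ => by positivity)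
    rw [ht] at this
    refine this.trans (le_of_eq ?_)
    rw [show (1 - 1 / 2 : ℝ) = 2⁻¹ by norm_num, inv_pow, one_div, inv_inv]
  set N : ℕ := Finset.univ.sup r with hN
  have hmaps : ∀ i ∈ (Finset.univ : Finset I), r i - 1 ∈ Finset.range N := by
    intro i hi
    have h1 : r i ≤ N := Finset.le_sup (f := r) hi
    have := hr i
    rw [Finset.mem_range]; omega
  set E : ℝ := Real.exp (-a / c) with hE
  have hE0 : 0 ≤ E := (Real.exp_pos _).le
  calc ∑ i : I, Real.exp (-(q * Real.exp ((r i : ℝ) / ξ) / Φ) ^ (1 / κ))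
      ≤ ∑ i : I, E * (1 / 2) ^ (r i - 1) := Finset.sum_le_sum fun i _ => hterm i
    _ = ∑ n ∈ Finset.range N, ∑ i ∈ Finset.univ.filter (fun i : I => r i - 1 = n),
          E * (1 / 2) ^ (r i - 1) := (Finset.sum_fiberwise_of_maps_to hmaps _).symm
    _ ≤ ∑ n ∈ Finset.range N, (K * 2 ^ D * M * D.factorial * E) *
          (((n + D).choose D : ℝ) * (1 / 2) ^ n) := by
        apply Finset.sum_le_sum
        intro n _
        have e : ∑ i ∈ Finset.univ.filter (fun i : I => r i - 1 = n),
            E * (1 / 2 : ℝ) ^ (r i - 1)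
            = ((Finset.univ.filter (fun i : I => r i = n + 1)).card : ℝ) * (E * (1 / 2) ^ n) := by
          rw [← nsmul_eq_mul, ← Finset.sum_const]
          apply Finset.sum_congr
          · ext i
            have := hr i
            simp only [Finset.mem_filter, Finset.mem_univ, true_and]
            omega
          · intro i hi
            simp only [Finset.mem_filter, Finset.mem_univ, true_and] at hi
            rw [hi, Nat.add_sub_cancel]
        rw [e]
        calc _ ≤ (K * (2 ^ D * M * (D.factorial * ((n + D).choose D : ℝ)))) * (E * (1 / 2) ^ n) := by
              apply mul_le_mul_of_nonneg_right _ (by positivity)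
              exact (hcard (n + 1) (by omega)).trans (mul_le_mul_of_nonneg_left (hpoly n) hK)
          _ = _ := by ring
    _ = (K * 2 ^ D * M * D.factorial * E) *
          ∑ n ∈ Finset.range N, ((n + D).choose D : ℝ) * (1 / 2) ^ n := by
        rw [Finset.mul_sum]
    _ ≤ (K * 2 ^ D * M * D.factorial * E) * 2 ^ (D + 1) :=
        mul_le_mul_of_nonneg_left (hgeom N) (by positivity)
    _ ≤ (K * 2 ^ D * M * D.factorial * E) * 2 ^ (D + 2) := by
        apply mul_le_mul_of_nonneg_left _ (by positivity)
        exact pow_le_pow_right₀ (by norm_num) (by omega)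
    _ = _ := by ring
end

section
/- For every natural number s and all positive real numbers Φ and κ, the series ∑_{x=1}^∞ (x−1)^s · exp(−(x/Φ)^{1/κ}) converges and satisfies ∑_{x=1}^∞ (x−1)^s · exp(−(x/Φ)^{1/κ}) ≤ Φ^{s+1} · κ · Γ(κ·(s+1)), where Γ denotes the Gamma function. -/
/-- Lemma 1 (iv) of the paper.
For every `s : ℕ` and positive reals `Φ, κ`, the series
`∑_{x=1}^∞ (x-1)^s exp(-(x/Φ)^{1/κ})` (reindexed via `x = n + 1` as a series
over `n : ℕ`) converges and is bounded by `Φ^{s+1} κ Γ(κ(s+1))`. -/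
theorem stmt_3 (s : ℕ) (Φ κ : ℝ) (hΦ : 0 < Φ) (hκ : 0 < κ) :
    Summable (fun n : ℕ => (n : ℝ) ^ s * Real.exp (-(((n : ℝ) + 1) / Φ) ^ (1 / κ))) ∧
      ∑' n : ℕ, (n : ℝ) ^ s * Real.exp (-(((n : ℝ) + 1) / Φ) ^ (1 / κ)) ≤
        Φ ^ (s + 1) * κ * Real.Gamma (κ * ((s : ℝ) + 1)) := by
  have hp : 0 < 1 / κ := by positivity
  have hb : 0 < (1 / Φ) ^ (1 / κ) := by positivity
  have hq : (-1 : ℝ) < (s : ℝ) := by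
    have : (0 : ℝ) ≤ s := Nat.cast_nonneg s
    linarith
  have hI := integral_rpow_mul_exp_neg_mul_rpow hp hq hb
  have hint := integrableOn_rpow_mul_exp_neg_mul_rpow hq hp hb
  have hcongr : Set.EqOn
      (fun x : ℝ => x ^ (s : ℝ) * Real.exp (-(1 / Φ) ^ (1 / κ) * x ^ (1 / κ)))
      (fun x : ℝ => x ^ s * Real.exp (-(x / Φ) ^ (1 / κ))) (Set.Ioi 0) := by
    intro x hx
    have hx' : (0 : ℝ) ≤ x := le_of_lt hx
    simp only
    rw [Real.rpow_natCast, neg_mul, ← Real.mul_rpow (by positivity) hx']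
    congr 4
    ring
  rw [MeasureTheory.setIntegral_congr_fun measurableSet_Ioi hcongr] at hI
  replace hint := hint.congr_fun hcongr measurableSet_Ioi
  have hval : ((1 / Φ) ^ (1 / κ)) ^ (-((s : ℝ) + 1) / (1 / κ)) * (1 / (1 / κ)) *
      Real.Gamma (((s : ℝ) + 1) / (1 / κ)) =
      Φ ^ (s + 1) * κ * Real.Gamma (κ * ((s : ℝ) + 1)) := by
    rw [← Real.rpow_mul (by positivity)]
    have h1 : 1 / κ * (-((s : ℝ) + 1) / (1 / κ)) = -((s + 1 : ℕ) : ℝ) := by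
      push_cast; field_simp
    have h2 : ((s : ℝ) + 1) / (1 / κ) = κ * ((s : ℝ) + 1) := by field_simp
    rw [h1, h2, one_div_one_div, one_div, Real.inv_rpow hΦ.le, Real.rpow_neg hΦ.le, inv_inv,
      Real.rpow_natCast]
  rw [hval] at hI
  have hcont : Continuous (fun x : ℝ => x ^ s * Real.exp (-(x / Φ) ^ (1 / κ))) := by
    have : Continuous (fun x : ℝ => (x / Φ) ^ (1 / κ)) :=
      (continuous_id.div_const Φ).rpow_const (fun _ => Or.inr hp.le)
    fun_prop
  have h0 : ∀ n : ℕ, 0 ≤ (n : ℝ) ^ s * Real.exp (-(((n : ℝ) + 1) / Φ) ^ (1 / κ)) :=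
    fun n => by positivity
  have hsum : ∀ n : ℕ, ∑ i ∈ Finset.range n,
      (i : ℝ) ^ s * Real.exp (-(((i : ℝ) + 1) / Φ) ^ (1 / κ)) ≤
        Φ ^ (s + 1) * κ * Real.Gamma (κ * ((s : ℝ) + 1)) := by
    intro n
    calc _ ≤ ∑ i ∈ Finset.range n, ∫ x in ((i : ℕ) : ℝ)..((i + 1 : ℕ) : ℝ),
            x ^ s * Real.exp (-(x / Φ) ^ (1 / κ)) := by
          refine Finset.sum_le_sum fun i _ => ?_
          have hm := intervalIntegral.integral_mono_on (μ := MeasureTheory.volume)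
            (a := (i : ℝ)) (b := ((i + 1 : ℕ) : ℝ))
            (f := fun _ => (i : ℝ) ^ s * Real.exp (-(((i : ℝ) + 1) / Φ) ^ (1 / κ)))
            (by push_cast; linarith) (by simp) (hcont.intervalIntegrable _ _)
            (by
              intro x hx
              have hi : (0 : ℝ) ≤ i := Nat.cast_nonneg i
              have hx1 := hx.1
              have hx2 := hx.2
              push_cast at hx2
              have hx0 : 0 ≤ x := hi.trans hx1
              gcongr)
          rw [intervalIntegral.integral_const] at hm
          simpa using hm
      _ = ∫ x in ((0 : ℕ) : ℝ)..(n : ℝ), x ^ s * Real.exp (-(x / Φ) ^ (1 / κ)) :=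
          intervalIntegral.sum_integral_adjacent_intervals
            (a := fun k : ℕ => (k : ℝ)) fun k _ => hcont.intervalIntegrable _ _
      _ ≤ _ := by
          rw [← hI, Nat.cast_zero, intervalIntegral.integral_of_le (Nat.cast_nonneg n)]
          refine MeasureTheory.setIntegral_mono_set hint ?_
            (Set.Ioc_subset_Ioi_self).eventuallyLE
          filter_upwards [MeasureTheory.ae_restrict_mem measurableSet_Ioi] with x hx
          have : (0 : ℝ) < x := hx
          simp only [Pi.zero_apply]
          positivity
  exact ⟨summable_of_sum_range_le h0 hsum, Real.tsum_le_of_sum_range_le h0 hsum⟩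
end

section
/- Let (p_n)_{n∈ℕ} be a sequence of nonnegative real numbers and let A ≥ 0, B > 0 and κ > 0 be reals. Assume that for every integer s ≥ 1 the series ∑_{n=0}^∞ n^s·p_n converges and satisfies ∑_{n=0}^∞ n^s·p_n ≤ e^{−1}·((A + s^κ·B)/e)^s. Then for every natural number k and every real x with x ≥ A + (k+1)^κ·B, one has ∑_{n∈ℕ, n ≥ x} n^k·p_n ≤ x^k · exp(−((x−A)/B)^{1/κ}). -/
/-- Lemma 2 of the paper: tail bounds from moment bounds.
Let `(p_n)` be nonnegative reals, `A ≥ 0`, `B > 0`, `κ > 0`, and assume that for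
every integer `s ≥ 1` the series `∑ n^s p_n` converges with
`∑_{n} n^s p_n ≤ e^{-1} ((A + s^κ B)/e)^s`.  Then for every `k : ℕ` and every
real `x ≥ A + (k+1)^κ B`, the tail sum satisfies
`∑_{n ≥ x} n^k p_n ≤ x^k exp(-((x-A)/B)^{1/κ})`. -/
theorem stmt_5 (p : ℕ → ℝ) (hp : ∀ n, 0 ≤ p n) (A B κ : ℝ)
    (hA : 0 ≤ A) (hB : 0 < B) (hκ : 0 < κ)
    (hmom : ∀ s : ℕ, 1 ≤ s →
      Summable (fun n : ℕ => (n : ℝ) ^ s * p n) ∧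
        ∑' n : ℕ, (n : ℝ) ^ s * p n ≤
          (Real.exp 1)⁻¹ * ((A + (s : ℝ) ^ κ * B) / Real.exp 1) ^ s)
    (k : ℕ) (x : ℝ) (hx : A + ((k : ℝ) + 1) ^ κ * B ≤ x) :
    Summable (fun n : {n : ℕ // x ≤ (n : ℝ)} => (n.1 : ℝ) ^ k * p n.1) ∧
      ∑' n : {n : ℕ // x ≤ (n : ℝ)}, (n.1 : ℝ) ^ k * p n.1 ≤
        x ^ k * Real.exp (-((x - A) / B) ^ (1 / κ)) := by
  set y : ℝ := ((x - A) / B) ^ (1 / κ) with hy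
  have hk1 : (0:ℝ) ≤ (k:ℝ) + 1 := by positivity
  have hkpow : (0:ℝ) < ((k:ℝ) + 1) ^ κ := by positivity
  have hxpos : 0 < x := by nlinarith [mul_pos hkpow hB]
  have hz : ((k:ℝ) + 1) ^ κ ≤ (x - A) / B := by
    rw [le_div_iff₀ hB]; linarith
  have hz0 : 0 ≤ (x - A) / B := hkpow.le.trans hz
  have hy0 : 0 ≤ y := Real.rpow_nonneg hz0 _
  have hyk : y ^ κ = (x - A) / B := by
    rw [hy, ← Real.rpow_mul hz0, one_div, inv_mul_cancel₀ hκ.ne', Real.rpow_one]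
  have hky : (k:ℝ) + 1 ≤ y := by
    rw [← hyk] at hz
    exact (Real.rpow_le_rpow_iff hk1 hy0 hκ).1 hz
  obtain ⟨s, hs⟩ : ∃ s, s = ⌊y⌋₊ := ⟨_, rfl⟩
  have hks : k + 1 ≤ s := by
    rw [hs]; apply Nat.le_floor; push_cast; exact hky
  have hsy : (s:ℝ) ≤ y := by rw [hs]; exact Nat.floor_le hy0
  have hys : y < (s:ℝ) + 1 := by rw [hs]; exact Nat.lt_floor_add_one y
  have hsx : A + (s:ℝ) ^ κ * B ≤ x := by
    have h1 : (s:ℝ) ^ κ ≤ (x - A) / B := by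
      rw [← hyk]; exact Real.rpow_le_rpow (by positivity) hsy hκ.le
    rw [le_div_iff₀ hB] at h1; linarith
  obtain ⟨hsum, hle⟩ := hmom s (by omega)
  have hxs : 0 < x ^ (s - k) := by positivity
  have hsplit : x ^ s = x ^ k * x ^ (s - k) := by rw [← pow_add]; congr 1; omega
  have hsub : Summable (fun n : {n : ℕ // x ≤ (n : ℝ)} => (n.1 : ℝ) ^ s * p n.1) :=
    hsum.comp_injective Subtype.val_injective
  have hterm : ∀ n : {n : ℕ // x ≤ (n : ℝ)},
      (n.1 : ℝ) ^ k * p n.1 ≤ (x ^ (s - k))⁻¹ * ((n.1 : ℝ) ^ s * p n.1) := by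
    intro n
    rw [le_inv_mul_iff₀ hxs]
    have h2 : (n.1:ℝ) ^ s = (n.1:ℝ) ^ (s - k) * (n.1:ℝ) ^ k := by
      rw [← pow_add]; congr 1; omega
    rw [h2, mul_assoc]
    exact mul_le_mul_of_nonneg_right (pow_le_pow_left₀ hxpos.le n.2 _)
      (mul_nonneg (by positivity) (hp _))
  have hS : Summable (fun n : {n : ℕ // x ≤ (n : ℝ)} => (n.1 : ℝ) ^ k * p n.1) :=
    Summable.of_nonneg_of_le (fun n => mul_nonneg (by positivity) (hp _)) hterm
      (hsub.mul_left _)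
  refine ⟨hS, ?_⟩
  have htail : ∑' n : {n : ℕ // x ≤ (n : ℝ)}, (n.1 : ℝ) ^ s * p n.1 ≤
      ∑' n : ℕ, (n : ℝ) ^ s * p n :=
    hsub.tsum_le_tsum_of_inj Subtype.val Subtype.val_injective
      (fun n _ => mul_nonneg (by positivity) (hp _)) (fun _ => le_rfl) hsum
  have hbase : 0 ≤ (A + (s:ℝ) ^ κ * B) / Real.exp 1 := by positivity
  calc ∑' n : {n : ℕ // x ≤ (n : ℝ)}, (n.1 : ℝ) ^ k * p n.1
      ≤ ∑' n : {n : ℕ // x ≤ (n : ℝ)}, (x ^ (s - k))⁻¹ * ((n.1 : ℝ) ^ s * p n.1) :=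
        hS.tsum_le_tsum hterm (hsub.mul_left _)
    _ = (x ^ (s - k))⁻¹ * ∑' n : {n : ℕ // x ≤ (n : ℝ)}, (n.1 : ℝ) ^ s * p n.1 :=
        tsum_mul_left
    _ ≤ (x ^ (s - k))⁻¹ * ((Real.exp 1)⁻¹ * (x / Real.exp 1) ^ s) := by
        refine mul_le_mul_of_nonneg_left (htail.trans (hle.trans ?_)) (by positivity)
        gcongr
    _ = x ^ k * Real.exp (-((s:ℝ) + 1)) := by
        have he : Real.exp (-((s:ℝ) + 1)) = (Real.exp 1 ^ s)⁻¹ * (Real.exp 1)⁻¹ := by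
          rw [Real.exp_neg, Real.exp_add, mul_inv, ← Real.exp_nat_mul, mul_one]
        rw [he, div_pow, hsplit]
        field_simp
    _ ≤ x ^ k * Real.exp (-y) := by
        gcongr
end

section
/- In the setting of the shell-summation lemmas, there exists p ∈ {1,…,p̃} such that Ñ_p + N_{1:p} ≤ (1 + ᾱ·(1 + 1/(ᾱ + χ))^{−(p̃−1)}) · N_{1:p̃}. -/
theorem aux_row (α : ℕ → ℝ) (hα : ∀ j, 0 < α j) (hsum : Summable α) (a b j : ℕ) :
    ∑ p ∈ Finset.Icc a b, α (Nat.dist p j) ≤ α 0 + 2 * ∑' j : ℕ, α (j + 1) := by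
  have hs1 : Summable (fun q => α (q + 1)) := (summable_nat_add_iff 1).2 hsum
  have hb : ∀ n, ∑ q ∈ Finset.range n, α (q + 1) ≤ ∑' q : ℕ, α (q + 1) := fun n =>
    hs1.sum_le_tsum _ (fun i _ => (hα _).le)
  have h1 : ∑ p ∈ Finset.Icc a b, α (Nat.dist p j) ≤
      ∑ p ∈ Finset.range (j + (b + 1)), α (Nat.dist p j) := by
    apply Finset.sum_le_sum_of_subset_of_nonneg
    · intro x hx
      simp only [Finset.mem_Icc, Finset.mem_range] at *
      omega
    · intro i _ _
      exact (hα _).le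
  rw [Finset.sum_range_add, Finset.sum_range_succ'] at h1
  have h2 : ∑ p ∈ Finset.range j, α (Nat.dist p j) = ∑ q ∈ Finset.range j, α (q + 1) := by
    rw [← Finset.sum_range_reflect]
    apply Finset.sum_congr rfl
    intro x hx
    rw [Finset.mem_range] at hx
    congr 1
    unfold Nat.dist
    omega
  have h3 : ∑ x ∈ Finset.range b, α (Nat.dist (j + (x + 1)) j)
      = ∑ q ∈ Finset.range b, α (q + 1) := by
    apply Finset.sum_congr rfl
    intro x hx
    congr 1
    unfold Nat.dist
    omega
  have h4 : Nat.dist (j + 0) j = 0 := by unfold Nat.dist; omega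
  rw [h2, h3, h4] at h1
  linarith [hb j, hb b]

theorem aux_tail (α : ℕ → ℝ) (hα : ∀ j, 0 < α j) (hsum : Summable α) (χ : ℝ)
    (hχα : ∀ j : ℕ, ∑' q : ℕ, α (q + 1 + j) ≤ χ * α j) (s b j : ℕ) (hj : j ≤ s) :
    ∑ p ∈ Finset.Icc (s + 1) b, α (Nat.dist p j) ≤ χ * α (Nat.dist s j) := by
  have hs1 : Summable (fun q => α (q + 1 + (s - j))) := by
    simpa only [add_assoc] using (summable_nat_add_iff (1 + (s - j))).2 hsum
  have hd : Nat.dist s j = s - j := by unfold Nat.dist; omega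
  rw [hd]
  refine le_trans ?_ (hχα (s - j))
  refine le_trans (le_of_eq ?_) (hs1.sum_le_tsum (Finset.range (b - s)) (fun i _ => (hα _).le))
  have : Finset.Icc (s + 1) b = Finset.Ico (s + 1) (b + 1) := by
    ext x; simp only [Finset.mem_Icc, Finset.mem_Ico]; omega
  rw [this, Finset.sum_Ico_eq_sum_range]
  have h5 : b + 1 - (s + 1) = b - s := by omega
  rw [h5]
  apply Finset.sum_congr rfl
  intro x hx
  congr 1
  unfold Nat.dist
  omega


/-- Lemma 8 of the paper: minimization of shell boson numbers.
Setting: `ptil ≥ 1`, nonnegative reals `N 1, …, N ptil`, a summable sequence of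
strictly positive reals `α`, `abar = α 0 + 2 ∑_{j≥1} α j`, and `χ ≥ 0` with
`∑_{p≥1} α (p+j) ≤ χ α j` for all `j`.  With
`Ñ_p = ∑_{j=1}^{ptil} α_{|p-j|} N_j` and `N_{1:p} = ∑_{j=1}^p N_j`, there exists
`p ∈ {1,…,ptil}` with
`Ñ_p + N_{1:p} ≤ (1 + abar (1 + 1/(abar+χ))^{-(ptil-1)}) N_{1:ptil}`. -/
theorem stmt_7 (ptil : ℕ) (hptil : 1 ≤ ptil) (N : ℕ → ℝ) (hN : ∀ j, 0 ≤ N j)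
    (α : ℕ → ℝ) (hα : ∀ j, 0 < α j) (hsum : Summable α)
    (abar χ : ℝ) (habar : abar = α 0 + 2 * ∑' j : ℕ, α (j + 1))
    (hχ : 0 ≤ χ) (hχα : ∀ j : ℕ, ∑' q : ℕ, α (q + 1 + j) ≤ χ * α j) :
    ∃ p ∈ Finset.Icc 1 ptil,
      (∑ j ∈ Finset.Icc 1 ptil, α (Nat.dist p j) * N j) + ∑ j ∈ Finset.Icc 1 p, N j ≤
        (1 + abar * (1 + 1 / (abar + χ)) ^ (-((ptil : ℤ) - 1))) *
          ∑ j ∈ Finset.Icc 1 ptil, N j := by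

  by_contra hcon
  push Not at hcon
  set T := ∑ j ∈ Finset.Icc 1 ptil, N j with hT
  set r := 1 + 1 / (abar + χ) with hr
  set c := abar * r ^ (-((ptil : ℤ) - 1)) * T with hc
  let M : ℕ → ℝ := fun p => ∑ j ∈ Finset.Icc 1 ptil, α (Nat.dist p j) * N j
  let A : ℕ → ℝ := fun s => ∑ p ∈ Finset.Icc s ptil, M p
  have hS : 0 < abar := by
    have : 0 ≤ ∑' j : ℕ, α (j + 1) := tsum_nonneg (fun i => (hα _).le)
    have := hα 0
    linarith
  have hK : 0 < abar + χ := by linarith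
  have hr0 : 0 < r := by positivity
  have hT0 : 0 ≤ T := Finset.sum_nonneg (fun i _ => hN i)
  have hc0 : 0 ≤ c := by positivity
  have hrow : ∀ a b j, ∑ p ∈ Finset.Icc a b, α (Nat.dist p j) ≤ abar := by
    intro a b j
    rw [habar]
    exact aux_row α hα hsum a b j
  have hsplit : ∀ s, s ≤ ptil → ∀ f : ℕ → ℝ, ∑ j ∈ Finset.Icc 1 ptil, f j =
      ∑ j ∈ Finset.Icc 1 s, f j + ∑ j ∈ Finset.Icc (s + 1) ptil, f j := by
    intro s hs f
    rw [← Finset.sum_union]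
    · congr 1
      ext x; simp only [Finset.mem_Icc, Finset.mem_union]; omega
    · rw [Finset.disjoint_left]
      intro x; simp only [Finset.mem_Icc]; omega
  have hcon' : ∀ p, 1 ≤ p → p ≤ ptil →
      ∑ j ∈ Finset.Icc (p + 1) ptil, N j + c < M p := by
    intro p h1 h2
    have h3 := hcon p (Finset.mem_Icc.2 ⟨h1, h2⟩)
    have h4 := hsplit p h2 N
    have h5 : (1 + abar * r ^ (-((ptil : ℤ) - 1))) * T = T + c := by rw [hc]; ring
    rw [h5] at h3
    change T = _ at h4
    change _ < M p + _ at h3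
    linarith
  have hA : ∀ s, A s = ∑ j ∈ Finset.Icc 1 ptil,
      (∑ p ∈ Finset.Icc s ptil, α (Nat.dist p j)) * N j := by
    intro s
    simp only [A, M]
    rw [Finset.sum_comm]
    simp only [Finset.sum_mul]
  have hA1 : A 1 ≤ abar * T := by
    rw [hA, hT, Finset.mul_sum]
    exact Finset.sum_le_sum fun j _ => mul_le_mul_of_nonneg_right (hrow _ _ _) (hN j)
  have hAs : ∀ s, s ≤ ptil →
      A (s + 1) ≤ abar * ∑ j ∈ Finset.Icc (s + 1) ptil, N j + χ * M s := by
    intro s hs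
    rw [hA, hsplit s hs]
    have e1 : ∑ j ∈ Finset.Icc (s + 1) ptil,
        (∑ p ∈ Finset.Icc (s + 1) ptil, α (Nat.dist p j)) * N j ≤
        abar * ∑ j ∈ Finset.Icc (s + 1) ptil, N j := by
      rw [Finset.mul_sum]
      exact Finset.sum_le_sum fun j _ => mul_le_mul_of_nonneg_right (hrow _ _ _) (hN j)
    have e2 : ∑ j ∈ Finset.Icc 1 s,
        (∑ p ∈ Finset.Icc (s + 1) ptil, α (Nat.dist p j)) * N j ≤
        χ * ∑ j ∈ Finset.Icc 1 s, α (Nat.dist s j) * N j := by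
      rw [Finset.mul_sum]
      refine Finset.sum_le_sum fun j hj => ?_
      rw [← mul_assoc]
      exact mul_le_mul_of_nonneg_right
        (aux_tail α hα hsum χ hχα s ptil j (Finset.mem_Icc.1 hj).2) (hN j)
    have e3 : ∑ j ∈ Finset.Icc 1 s, α (Nat.dist s j) * N j ≤ M s := by
      simp only [M]
      rw [hsplit s hs]
      have : 0 ≤ ∑ j ∈ Finset.Icc (s + 1) ptil, α (Nat.dist s j) * N j :=
        Finset.sum_nonneg fun j _ => mul_nonneg (hα _).le (hN j)
      linarith
    have e4 := mul_le_mul_of_nonneg_left e3 hχ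
    linarith
  have hstep : ∀ s, 1 ≤ s → s ≤ ptil → r * A (s + 1) ≤ A s := by
    intro s h1 h2
    have e1 := hAs s h2
    have e2 := hcon' s h1 h2
    have e3 : A s = M s + A (s + 1) := by
      simp only [A]
      rw [← Finset.insert_Icc_add_one_left_eq_Icc h2, Finset.sum_insert]
      simp
    have e4 : A (s + 1) ≤ (abar + χ) * M s := by nlinarith
    have e5 : A (s + 1) / (abar + χ) ≤ M s := by
      rw [div_le_iff₀ hK]; linarith
    rw [e3, hr, add_mul, one_mul, one_div_mul_eq_div]
    linarith
  have hind : ∀ k, k + 1 ≤ ptil → r ^ k * c < A (ptil - k) := by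
    intro k
    induction k with
    | zero =>
      intro _
      have := hcon' ptil hptil le_rfl
      simpa [A] using this
    | succ k ih =>
      intro hk
      have e1 := ih (by omega)
      have e2 := hstep (ptil - (k + 1)) (by omega) (by omega)
      have e3 : ptil - (k + 1) + 1 = ptil - k := by omega
      rw [e3] at e2
      have e4 := mul_lt_mul_of_pos_left e1 hr0
      rw [pow_succ]
      linarith
  have hfin := hind (ptil - 1) (by omega)
  have e1 : ptil - (ptil - 1) = 1 := by omega
  have e2 : r ^ (ptil - 1) * r ^ (-((ptil : ℤ) - 1)) = 1 := by
    rw [← zpow_natCast, ← zpow_add₀ hr0.ne']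
    have : ((ptil - 1 : ℕ) : ℤ) + -((ptil : ℤ) - 1) = 0 := by omega
    rw [this, zpow_zero]
  have e3 : r ^ (ptil - 1) * c = abar * T := by
    rw [hc]
    linear_combination abar * T * e2
  rw [e1, e3] at hfin
  linarith
end

section
/- In the setting of the shell-summation lemmas, there exists p ∈ {1,…,p̃} such that N_{1:p} − Ñ_p ≥ −ᾱ·(1 + 1/(ᾱ + χ))^{−(p̃−1)} · N_{1:p̃}. -/
theorem aux_inj (β : ℕ → ℝ) (hβ : ∀ j, 0 ≤ β j) (hs : Summable β) (s : Finset ℕ) (g : ℕ → ℕ)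
    (hg : Set.InjOn g s) : ∑ p ∈ s, β (g p) ≤ ∑' q, β q := by
  rw [← Finset.sum_image (f := β) hg]
  exact hs.sum_le_tsum _ (fun i _ => hβ i)

theorem aux_A (α : ℕ → ℝ) (hα : ∀ j, 0 < α j) (hsum : Summable α) (k j : ℕ) :
    ∑ p ∈ Finset.Icc 1 k, α (Nat.dist p j) ≤ α 0 + 2 * ∑' j : ℕ, α (j + 1) := by
  have hs1 : Summable (fun j => α (j + 1)) := (summable_nat_add_iff 1).2 hsum
  have h1 := aux_inj (fun q => α (q + 1)) (fun q => (hα _).le) hs1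
    ((Finset.Icc 1 k).filter (fun p => p < j)) (fun p => j - p - 1) (by
      intro a ha b hb hab
      simp at ha hb hab
      omega)
  have h2 := aux_inj (fun q => α (q + 1)) (fun q => (hα _).le) hs1
    (((Finset.Icc 1 k).filter (fun p => ¬ p < j)).filter (fun p => j < p)) (fun p => p - j - 1) (by
      intro a ha b hb hab
      simp at ha hb hab
      omega)
  have h3 : ∑ p ∈ ((Finset.Icc 1 k).filter (fun p => ¬ p < j)).filter (fun p => ¬ j < p),
      α (Nat.dist p j) ≤ α 0 := by
    calc _ ≤ ∑ p ∈ {j}, α (Nat.dist p j) := by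
          apply Finset.sum_le_sum_of_subset_of_nonneg
          · intro p hp
            simp at hp ⊢
            omega
          · intro i _ _
            exact (hα _).le
      _ = α 0 := by simp
  have e1 : ∑ p ∈ (Finset.Icc 1 k).filter (fun p => p < j), α (Nat.dist p j) =
      ∑ p ∈ (Finset.Icc 1 k).filter (fun p => p < j), α (j - p - 1 + 1) := by
    apply Finset.sum_congr rfl
    intro p hp
    simp at hp
    congr 1
    unfold Nat.dist
    omega
  have e2 : ∑ p ∈ ((Finset.Icc 1 k).filter (fun p => ¬ p < j)).filter (fun p => j < p),
        α (Nat.dist p j) =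
      ∑ p ∈ ((Finset.Icc 1 k).filter (fun p => ¬ p < j)).filter (fun p => j < p),
        α (p - j - 1 + 1) := by
    apply Finset.sum_congr rfl
    intro p hp
    simp at hp
    congr 1
    unfold Nat.dist
    omega
  rw [← Finset.sum_filter_add_sum_filter_not (Finset.Icc 1 k) (fun p => p < j),
    ← Finset.sum_filter_add_sum_filter_not ((Finset.Icc 1 k).filter (fun p => ¬ p < j))
      (fun p => j < p), e1, e2]
  linarith

theorem aux_B (α : ℕ → ℝ) (hα : ∀ j, 0 < α j) (hsum : Summable α) (χ : ℝ)
    (hχα : ∀ j : ℕ, ∑' q : ℕ, α (q + 1 + j) ≤ χ * α j) (k j : ℕ) (hj : k < j) :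
    ∑ p ∈ Finset.Icc 1 k, α (Nat.dist p j) ≤ χ * α (Nat.dist (k + 1) j) := by
  have hs1 : Summable (fun q => α (q + 1 + (j - k - 1))) := by
    have := (summable_nat_add_iff (1 + (j - k - 1))).2 hsum
    simpa [add_assoc] using this
  have h1 := aux_inj (fun q => α (q + 1 + (j - k - 1))) (fun q => (hα _).le) hs1
    (Finset.Icc 1 k) (fun p => k - p) (by
      intro a ha b hb hab
      simp at ha hb hab
      omega)
  have e1 : ∑ p ∈ Finset.Icc 1 k, α (Nat.dist p j) =
      ∑ p ∈ Finset.Icc 1 k, α (k - p + 1 + (j - k - 1)) := by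
    apply Finset.sum_congr rfl
    intro p hp
    simp at hp
    congr 1
    unfold Nat.dist
    omega
  have e2 : Nat.dist (k + 1) j = j - k - 1 := by
    unfold Nat.dist
    omega
  rw [e1, e2]
  exact h1.trans (hχα _)


/-- Lemma 9 of the paper: maximization counterpart of Lemma 8.
In the shell-summation setting (see Statement 7), there exists
`p ∈ {1,…,ptil}` with
`N_{1:p} - Ñ_p ≥ -abar (1 + 1/(abar+χ))^{-(ptil-1)} N_{1:ptil}`. -/
theorem stmt_8 (ptil : ℕ) (hptil : 1 ≤ ptil) (N : ℕ → ℝ) (hN : ∀ j, 0 ≤ N j)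
    (α : ℕ → ℝ) (hα : ∀ j, 0 < α j) (hsum : Summable α)
    (abar χ : ℝ) (habar : abar = α 0 + 2 * ∑' j : ℕ, α (j + 1))
    (hχ : 0 ≤ χ) (hχα : ∀ j : ℕ, ∑' q : ℕ, α (q + 1 + j) ≤ χ * α j) :
    ∃ p ∈ Finset.Icc 1 ptil,
      (∑ j ∈ Finset.Icc 1 p, N j) - ∑ j ∈ Finset.Icc 1 ptil, α (Nat.dist p j) * N j ≥
        -(abar * (1 + 1 / (abar + χ)) ^ (-((ptil : ℤ) - 1)) *
          ∑ j ∈ Finset.Icc 1 ptil, N j) := by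
  have hpos : 0 < abar := by
    rw [habar]
    have : 0 ≤ ∑' j : ℕ, α (j + 1) := tsum_nonneg (fun j => (hα _).le)
    linarith [hα 0]
  by_contra hcon
  push Not at hcon
  set S : ℕ → ℝ := fun p => ∑ j ∈ Finset.Icc 1 p, N j with hS
  set T : ℕ → ℝ := fun p => ∑ j ∈ Finset.Icc 1 ptil, α (Nat.dist p j) * N j with hT
  set U : ℕ → ℝ := fun k => ∑ p ∈ Finset.Icc 1 k, T p with hU
  set r : ℝ := 1 + 1 / (abar + χ) with hr
  have hac : 0 < abar + χ := by linarith
  have hrpos : 0 < r := by positivity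
  set c : ℝ := abar * r ^ (-((ptil : ℤ) - 1)) * S ptil with hc
  have hSnn : ∀ p, 0 ≤ S p := fun p => Finset.sum_nonneg (fun j _ => hN j)
  have hcnn : 0 ≤ c := by
    have := hSnn ptil
    positivity
  have hTS : ∀ p ∈ Finset.Icc 1 ptil, S p + c < T p := by
    intro p hp
    have h : S p - T p < -c := hcon p hp
    linarith
  have hUe : ∀ k, U k = ∑ j ∈ Finset.Icc 1 ptil,
      (∑ p ∈ Finset.Icc 1 k, α (Nat.dist p j)) * N j := by
    intro k
    simp only [hU, hT]
    rw [Finset.sum_comm]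
    simp only [Finset.sum_mul]
  have hUtot : U ptil ≤ abar * S ptil := by
    rw [hUe, hS, Finset.mul_sum]
    apply Finset.sum_le_sum
    intro j _
    rw [habar]
    exact mul_le_mul_of_nonneg_right (aux_A α hα hsum _ _) (hN j)
  have hUk : ∀ k, k < ptil → U k ≤ abar * S k + χ * T (k + 1) := by
    intro k hk
    have e : S k = ∑ j ∈ Finset.Icc 1 ptil, if j ≤ k then N j else 0 := by
      rw [← Finset.sum_filter]
      apply Finset.sum_congr _ (fun _ _ => rfl)
      ext j
      simp
      omega
    rw [hUe, e, hT, Finset.mul_sum, Finset.mul_sum, ← Finset.sum_add_distrib]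
    apply Finset.sum_le_sum
    intro j _
    have hnn : 0 ≤ χ * (α (Nat.dist (k + 1) j) * N j) :=
      mul_nonneg hχ (mul_nonneg (hα _).le (hN j))
    split_ifs with hjk
    · have := mul_le_mul_of_nonneg_right (aux_A α hα hsum k j) (hN j)
      rw [← habar] at this
      linarith
    · have := mul_le_mul_of_nonneg_right (aux_B α hα hsum χ hχα k j (by omega)) (hN j)
      linarith
  have hstep : ∀ k, U (k + 1) = U k + T (k + 1) := fun k =>
    Finset.sum_Icc_succ_top (by omega) _
  have hSstep : ∀ k, S (k + 1) = S k + N (k + 1) := fun k =>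
    Finset.sum_Icc_succ_top (by omega) _
  have hgrow : ∀ k, k < ptil → r * U k ≤ U (k + 1) := by
    intro k hk
    have h1 := hUk k hk
    have h2 := hTS (k + 1) (by simp; omega)
    have h3 := hSstep k
    have h4 := hN (k + 1)
    have h5 : abar * S k ≤ abar * T (k + 1) :=
      mul_le_mul_of_nonneg_left (by linarith) hpos.le
    have h6 : U k / (abar + χ) ≤ T (k + 1) := by
      rw [div_le_iff₀ hac]
      linarith
    rw [hstep, hr]
    have : (1 + 1 / (abar + χ)) * U k = U k + U k / (abar + χ) := by ring
    linarith
  have hind : ∀ k, k + 1 ≤ ptil → r ^ k * c < U (k + 1) := by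
    intro k
    induction k with
    | zero =>
      intro h
      have h2 := hTS 1 (by simp; omega)
      have h3 : U (0 + 1) = T 1 := by simp [hU]
      have := hSnn 1
      rw [h3]
      simp
      linarith
    | succ k ih =>
      intro h
      have h1 := ih (by omega)
      have h2 := hgrow (k + 1) (by omega)
      have h3 := mul_lt_mul_of_pos_left h1 hrpos
      rw [pow_succ]
      linarith
  obtain ⟨m, rfl⟩ : ∃ m, ptil = m + 1 := ⟨ptil - 1, by omega⟩
  have hfin := hind m le_rfl
  have hcc : r ^ m * c = abar * S (m + 1) := by
    have : -(((m + 1 : ℕ) : ℤ) - 1) = -(m : ℤ) := by push_cast; ring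
    rw [hc, this, zpow_neg, zpow_natCast]
    field_simp
  linarith
end

section
/- In the setting of the shell-summation lemmas, for every p ∈ {1,…,p̃}: ∑_{p'=p+1}^{p̃} Ñ_{p'} ≤ ᾱ·∑_{j=p+1}^{p̃} N_j + χ·Ñ_p. -/
theorem aux_sum_le (S : Finset ℕ) (f : ℕ → ℕ) (g : ℕ → ℝ) (hg : ∀ j, 0 ≤ g j) (hs : Summable g)
    (hf : Set.InjOn f S) : ∑ i ∈ S, g (f i) ≤ ∑' i, g i := by
  rw [← Finset.sum_image (f := g) hf]
  exact hs.sum_le_tsum _ (fun i _ => hg i)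

/-- key inequality inside the proof of Lemma 8 of the paper.
In the shell-summation setting (see Statement 7), for every `p ∈ {1,…,ptil}`:
`∑_{p'=p+1}^{ptil} Ñ_{p'} ≤ abar ∑_{j=p+1}^{ptil} N_j + χ Ñ_p`. -/
theorem stmt_10 (ptil : ℕ) (hptil : 1 ≤ ptil) (N : ℕ → ℝ) (hN : ∀ j, 0 ≤ N j)
    (α : ℕ → ℝ) (hα : ∀ j, 0 < α j) (hsum : Summable α)
    (abar χ : ℝ) (habar : abar = α 0 + 2 * ∑' j : ℕ, α (j + 1))
    (hχ : 0 ≤ χ) (hχα : ∀ j : ℕ, ∑' q : ℕ, α (q + 1 + j) ≤ χ * α j) :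
    ∀ p ∈ Finset.Icc 1 ptil,
      (∑ p' ∈ Finset.Icc (p + 1) ptil, ∑ j ∈ Finset.Icc 1 ptil, α (Nat.dist p' j) * N j) ≤
        abar * (∑ j ∈ Finset.Icc (p + 1) ptil, N j) +
          χ * ∑ j ∈ Finset.Icc 1 ptil, α (Nat.dist p j) * N j := by
  intro p hp
  rw [Finset.mem_Icc] at hp
  have hs (k : ℕ) : Summable (fun q : ℕ => α (q + 1 + k)) := by
    have := (summable_nat_add_iff (1 + k)).2 hsum
    simpa [add_assoc] using this
  have hs1 : Summable (fun q : ℕ => α (q + 1)) := (summable_nat_add_iff 1).2 hsum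
  have h1 : ∀ j, j ≤ p → ∑ p' ∈ Finset.Icc (p + 1) ptil, α (Nat.dist p' j)
      ≤ χ * α (Nat.dist p j) := by
    intro j hj
    refine le_trans ?_ (hχα (Nat.dist p j))
    refine le_trans (le_of_eq ?_) (aux_sum_le (Finset.Icc (p + 1) ptil) (fun x => x - (p + 1))
      (fun q => α (q + 1 + Nat.dist p j)) (fun q => (hα _).le) (hs _) ?_)
    · refine Finset.sum_congr rfl fun x hx => ?_
      rw [Finset.mem_Icc] at hx
      congr 1
      simp only [Nat.dist]
      omega
    · intro x hx y hy hxy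
      simp only [Finset.coe_Icc, Set.mem_Icc] at hx hy hxy
      omega
  have h2 : ∀ j, ∑ p' ∈ Finset.Icc (p + 1) ptil, α (Nat.dist p' j) ≤ abar := by
    intro j
    have e : ∀ x, α (Nat.dist x j) = (if x < j then α (j - x - 1 + 1) else 0)
        + (if x = j then α 0 else 0) + (if j < x then α (x - j - 1 + 1) else 0) := by
      intro x
      rcases lt_trichotomy x j with h | h | h
      · have : Nat.dist x j = j - x - 1 + 1 := by simp only [Nat.dist]; omega
        rw [this, if_pos h, if_neg h.ne, if_neg h.not_gt]; simp
      · subst h; simp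
      · have : Nat.dist x j = x - j - 1 + 1 := by simp only [Nat.dist]; omega
        rw [this, if_pos h, if_neg h.ne', if_neg h.not_gt]; simp
    simp only [e, Finset.sum_add_distrib]
    rw [← Finset.sum_filter, ← Finset.sum_filter (p := fun x => j < x)]
    have a1 := aux_sum_le ((Finset.Icc (p + 1) ptil).filter (fun x => x < j))
      (fun x => j - x - 1) (fun q => α (q + 1)) (fun q => (hα _).le) hs1 (by
        intro x hx y hy hxy
        simp only [Finset.coe_filter, Set.mem_ofPred_eq] at hx hy hxy
        omega)
    have a2 := aux_sum_le ((Finset.Icc (p + 1) ptil).filter (fun x => j < x))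
      (fun x => x - j - 1) (fun q => α (q + 1)) (fun q => (hα _).le) hs1 (by
        intro x hx y hy hxy
        simp only [Finset.coe_filter, Set.mem_ofPred_eq] at hx hy hxy
        omega)
    have a3 : ∑ x ∈ Finset.Icc (p + 1) ptil, (if x = j then α 0 else 0) ≤ α 0 := by
      rw [Finset.sum_ite_eq']
      split_ifs
      · exact le_rfl
      · exact (hα 0).le
    linarith
  have e2 : ∑ j ∈ Finset.Icc (p + 1) ptil, N j
      = ∑ j ∈ Finset.Icc 1 ptil, if p < j then N j else 0 := by
    rw [← Finset.sum_filter]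
    congr 1
    ext x
    simp only [Finset.mem_Icc, Finset.mem_filter]
    omega
  rw [Finset.sum_comm, e2, Finset.mul_sum, Finset.mul_sum, ← Finset.sum_add_distrib]
  refine Finset.sum_le_sum fun j _ => ?_
  rw [← Finset.sum_mul]
  have hn := hN j
  split_ifs with h
  · have := mul_le_mul_of_nonneg_right (h2 j) hn
    have := mul_nonneg hχ (mul_nonneg (hα (Nat.dist p j)).le hn)
    linarith
  · have := mul_le_mul_of_nonneg_right (h1 j (not_lt.1 h)) hn
    linarith
end

section
/- For all natural numbers p and s' with p ≤ s', and all real numbers c ≥ 0 and τ ≥ 0, the p-th iterated derivative of the function x ↦ x^{s'}·exp(c·s'·x), evaluated at τ, satisfies: (d/dx)^p [x^{s'}·exp(c·s'·x)] (τ) ≤ (s')^p · τ^{s'−p} · exp(c·s'·τ) · (1 + c·τ)^p. -/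
/-- derivative estimate from the proof of Subtheorem 1 of the
paper.  For naturals `p ≤ s'` and reals `c, τ ≥ 0`:
`(d/dx)^p [x^{s'} e^{c s' x}](τ) ≤ (s')^p τ^{s'-p} e^{c s' τ} (1 + c τ)^p`. -/
theorem stmt_15 (p s' : ℕ) (hps : p ≤ s') (c τ : ℝ) (hc : 0 ≤ c) (hτ : 0 ≤ τ) :
    iteratedDeriv p (fun x : ℝ => x ^ s' * Real.exp (c * s' * x)) τ ≤
      (s' : ℝ) ^ p * τ ^ (s' - p) * Real.exp (c * s' * τ) * (1 + c * τ) ^ p := by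
  rw [iteratedDeriv_fun_mul (by fun_prop) (by fun_prop), add_pow, Finset.mul_sum]
  apply Finset.sum_le_sum
  intro i hi
  have hi' : i ≤ p := by simpa [Nat.lt_succ_iff] using hi
  obtain ⟨j, rfl⟩ := Nat.exists_eq_add_of_le hi'
  obtain ⟨k, rfl⟩ := Nat.exists_eq_add_of_le hps
  have e1 : i + j - i = j := by omega
  have e2 : i + j + k - i = j + k := by omega
  have e3 : i + j + k - (i + j) = k := by omega
  have h : (((i + j + k).descFactorial i : ℕ) : ℝ) ≤ ((i + j + k : ℕ) : ℝ) ^ i := by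
    exact_mod_cast Nat.descFactorial_le_pow _ _
  rw [iteratedDeriv_exp_const_mul, iteratedDeriv_pow, e1, e2, e3]
  generalize (((i + j + k).descFactorial i : ℕ) : ℝ) = D at *
  have hS : (0 : ℝ) ≤ ((i + j + k : ℕ) : ℝ) := Nat.cast_nonneg _
  generalize ((i + j + k : ℕ) : ℝ) = S at *
  calc _ = D * ((((i + j).choose i : ℕ) : ℝ) * τ ^ (j + k) * ((c * S) ^ j * Real.exp (c * S * τ))) := by ring
    _ ≤ S ^ i * ((((i + j).choose i : ℕ) : ℝ) * τ ^ (j + k) * ((c * S) ^ j * Real.exp (c * S * τ))) := by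
      gcongr
    _ = _ := by ring
end

section
/- Let T ≥ 0 be a real number and let (f_m)_{m∈ℕ} be a sequence of continuous functions f_m : ℝ → ℝ that are nonnegative on [0,T] and satisfy f_m(τ) ≤ f_m(0) + 2·∫₀^τ f_{m+1}(s) ds for every m ∈ ℕ and every τ ∈ [0,T]. Assume there exist real numbers c_m with f_m(s) ≤ c_m for all s ∈ [0,T] and all m, such that (2T)^M·c_M/M! → 0 as M → ∞. Then for every τ ∈ [0,T] for which the series ∑_{m=0}^∞ (2τ)^m·f_m(0)/m! converges, one has f_0(τ) ≤ ∑_{m=0}^∞ (2τ)^m·f_m(0)/m!. -/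
theorem aux_int (m : ℕ) (a t : ℝ) :
    2 * ∫ s in (0 : ℝ)..t, (2 * s) ^ m * a / Nat.factorial m
      = (2 * t) ^ (m + 1) * a / Nat.factorial (m + 1) := by
  have h : ∀ s : ℝ, (2 * s) ^ m * a / Nat.factorial m
      = (2 ^ m * a / Nat.factorial m) * s ^ m := by
    intro s; rw [mul_pow]; ring
  simp_rw [h]
  rw [intervalIntegral.integral_const_mul, integral_pow, Nat.factorial_succ]
  have h1 : (Nat.factorial m : ℝ) ≠ 0 := by positivity
  have h2 : (m : ℝ) + 1 ≠ 0 := by positivity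
  push_cast
  rw [mul_pow, zero_pow (Nat.succ_ne_zero m)]
  field_simp
  ring

theorem aux_bound (T : ℝ) (f : ℕ → ℝ → ℝ)
    (hcont : ∀ m, Continuous (f m))
    (hrec : ∀ m, ∀ τ ∈ Set.Icc (0 : ℝ) T,
      f m τ ≤ f m 0 + 2 * ∫ s in (0 : ℝ)..τ, f (m + 1) s)
    (c : ℕ → ℝ) (hc : ∀ m, ∀ s ∈ Set.Icc (0 : ℝ) T, f m s ≤ c m) (M : ℕ) :
    ∀ k, ∀ t ∈ Set.Icc (0 : ℝ) T,
      f k t ≤ ∑ m ∈ Finset.range M, (2 * t) ^ m * f (k + m) 0 / Nat.factorial m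
        + (2 * t) ^ M * c (k + M) / Nat.factorial M := by
  induction M with
  | zero => intro k t ht; simpa using hc k t ht
  | succ M ih =>
    intro k t ht
    have hi : ∀ (m : ℕ) (a : ℝ), IntervalIntegrable
        (fun s : ℝ => (2 * s) ^ m * a / Nat.factorial m) MeasureTheory.volume 0 t :=
      fun m a => Continuous.intervalIntegrable (by fun_prop) _ _
    have h1 : ∫ s in (0 : ℝ)..t, f (k + 1) s ≤ ∫ s in (0 : ℝ)..t,
        (∑ m ∈ Finset.range M, (2 * s) ^ m * f (k + 1 + m) 0 / Nat.factorial m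
        + (2 * s) ^ M * c (k + 1 + M) / Nat.factorial M) := by
      apply intervalIntegral.integral_mono_on ht.1
      · exact (hcont _).intervalIntegrable _ _
      · exact Continuous.intervalIntegrable (by fun_prop) _ _
      · intro s hs
        exact ih (k + 1) s ⟨hs.1, hs.2.trans ht.2⟩
    rw [intervalIntegral.integral_add (Continuous.intervalIntegrable (by fun_prop) _ _) (hi _ _),
      intervalIntegral.integral_finsetSum (fun m _ => hi m _)] at h1
    have h2 := hrec k t ht
    have h3 : f k t ≤ f k 0 + (∑ m ∈ Finset.range M,
        2 * (∫ s in (0 : ℝ)..t, (2 * s) ^ m * f (k + 1 + m) 0 / Nat.factorial m)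
        + 2 * ∫ s in (0 : ℝ)..t, (2 * s) ^ M * c (k + 1 + M) / Nat.factorial M) := by
      rw [← Finset.mul_sum]; linarith
    simp_rw [aux_int] at h3
    rw [Finset.sum_range_succ']
    have e : ∀ m, k + 1 + m = k + (m + 1) := fun m => by omega
    simp_rw [e] at h3
    simp only [pow_zero, Nat.factorial_zero, Nat.cast_one, add_zero, one_mul, div_one]
    linarith

/-- iterated-integration step in the proof of Subtheorem 1 of
the paper.  Let `f_m : ℝ → ℝ` be continuous, nonnegative on `[0, T]`, with
`f_m(τ) ≤ f_m(0) + 2∫₀^τ f_{m+1}` on `[0, T]`, and uniformly bounded by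
constants `c_m` with `(2T)^M c_M / M! → 0`.  Then for every `τ ∈ [0, T]` for
which `∑_m (2τ)^m f_m(0)/m!` converges, `f_0(τ) ≤ ∑_m (2τ)^m f_m(0)/m!`. -/
theorem stmt_16 (T : ℝ) (hT : 0 ≤ T) (f : ℕ → ℝ → ℝ)
    (hcont : ∀ m, Continuous (f m))
    (hnonneg : ∀ m, ∀ s ∈ Set.Icc (0 : ℝ) T, 0 ≤ f m s)
    (hrec : ∀ m, ∀ τ ∈ Set.Icc (0 : ℝ) T,
      f m τ ≤ f m 0 + 2 * ∫ s in (0 : ℝ)..τ, f (m + 1) s)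
    (c : ℕ → ℝ) (hc : ∀ m, ∀ s ∈ Set.Icc (0 : ℝ) T, f m s ≤ c m)
    (hlim : Filter.Tendsto (fun M : ℕ => (2 * T) ^ M * c M / Nat.factorial M)
      Filter.atTop (nhds 0))
    (τ : ℝ) (hτ : τ ∈ Set.Icc (0 : ℝ) T)
    (hsumm : Summable (fun m : ℕ => (2 * τ) ^ m * f m 0 / Nat.factorial m)) :
    f 0 τ ≤ ∑' m : ℕ, (2 * τ) ^ m * f m 0 / Nat.factorial m := by
  have hb := fun M => aux_bound T f hcont hrec c hc M 0 τ hτ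
  simp only [zero_add] at hb
  have h0 : (0 : ℝ) ∈ Set.Icc (0 : ℝ) T := ⟨le_rfl, hT⟩
  have hτ0 := hτ.1
  have key : ∀ M : ℕ, f 0 τ ≤ (∑' m : ℕ, (2 * τ) ^ m * f m 0 / Nat.factorial m)
      + (2 * T) ^ M * c M / Nat.factorial M := by
    intro M
    refine (hb M).trans (add_le_add ?_ ?_)
    · refine hsumm.sum_le_tsum _ (fun m _ => ?_)
      have := hnonneg m 0 h0
      positivity
    · have hcM : 0 ≤ c M := (hnonneg M 0 h0).trans (hc M 0 h0)
      have := hτ.2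
      gcongr
  have hl := hlim.const_add (∑' m : ℕ, (2 * τ) ^ m * f m 0 / Nat.factorial m)
  rw [add_zero] at hl
  exact ge_of_tendsto' hl key
end

section
/- Let Λ be a finite set and d : Λ → Λ → ℝ a nonnegative function satisfying the triangle inequality d(i,j) ≤ d(i,k) + d(k,j) for all i, j, k ∈ Λ. Let λ ≥ 0 be a real number such that ∑_{k∈Λ} exp(−d(i,k)/4) ≤ λ for every i ∈ Λ. Then for all i, j ∈ Λ: ∑_{k∈Λ} exp(−d(i,k) − d(k,j)) ≤ λ · exp(−3·d(i,j)/4). -/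
/-- triangle-inequality convolution bound, used e.g. in the
proof of Lemma 12 of the paper.  Let `Λ` be finite, `d : Λ → Λ → ℝ`
nonnegative and satisfying the triangle inequality, and `lam ≥ 0` with
`∑_k exp(-d(i,k)/4) ≤ lam` for all `i`.  Then for all `i, j`:
`∑_k exp(-d(i,k) - d(k,j)) ≤ lam · exp(-3 d(i,j)/4)`. -/
theorem stmt_18 {Λ : Type*} [Fintype Λ] (d : Λ → Λ → ℝ)
    (hd0 : ∀ i j : Λ, 0 ≤ d i j)
    (htri : ∀ i j k : Λ, d i j ≤ d i k + d k j)
    (lam : ℝ) (hlam : 0 ≤ lam)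
    (hbound : ∀ i : Λ, ∑ k : Λ, Real.exp (-(d i k) / 4) ≤ lam)
    (i j : Λ) :
    ∑ k : Λ, Real.exp (-(d i k) - d k j) ≤ lam * Real.exp (-(3 * d i j) / 4) := by
  refine le_trans ?_ (mul_le_mul_of_nonneg_right (hbound i) (Real.exp_pos _).le)
  rw [Finset.sum_mul]
  refine Finset.sum_le_sum fun k _ => ?_
  rw [← Real.exp_add]
  apply Real.exp_le_exp.mpr
  linarith [htri i j k, hd0 k j]
end
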